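/- arXiv:2004.00086 — 2 statements merged into one kernel-verified Lean document; each statement's English description precedes it below -/
import Mathlib

section
/- Let n ≥ 2 be an integer, r_s > 0, and V(r) = 1 + r_sⁿ/rⁿ. Let k ≥ 0 and R > 0 with 1 − k² V(R) > 0, and set h = R √((1 − k² V(R))/V(R)) > 0. Then for every r > R one has 1 − V(r)(k² + h²/r²) > 0, and 2h ∫_R^∞ dr / (r² √(1 − V(r)(k² + h²/r²))) ≤ π/√(V(R)) < π. -/
open Real

/-!
The potential only enters through `V r ≤ V R` for `r > R`. Freezing it at the constant `V R` keeps
the turning point and lowers the radial velocity elsewhere, so it can only increase the angular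
change. For the frozen potential the radial velocity is `√(V R) * (h / R) * √(1 - (R / r) ^ 2)`, a
multiple of that of a straight line at distance `R` from the origin. The line turns by `π`, hence
the frozen geodesic by `π / √(V R)`: it is a straight line in a cone.
-/

open Set Filter Topology MeasureTheory

/-- The squared radial velocity `ṙ² = 1 - V(r)(k² + h²/r²)` of an equatorial causal geodesic with
angular momentum `h` in the metric `V dt² - dr²/V - r² dω²`. It is negative at the radii that
the geodesic cannot reach. -/
noncomputable def radialVelocitySq (V : ℝ → ℝ) (k h r : ℝ) : ℝ :=
  1 - V r * (k ^ 2 + h ^ 2 / r ^ 2)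

/-- The total angular change `|Δφ| = 2h ∫_R^∞ dr/(r² ṙ)` of the geodesic with turning point `R`. It
is `∞` when the integral diverges, but since `√x = 0` for `x ≤ 0` and `1 / 0 = 0`, radii where the
squared radial velocity is not positive contribute nothing. -/
noncomputable def angularChange (V : ℝ → ℝ) (k h R : ℝ) : ENNReal :=
  ENNReal.ofReal (2 * h) *
    ∫⁻ r in Ioi R, ENNReal.ofReal (1 / (r ^ 2 * √(radialVelocitySq V k h r)))

section RadialVelocity

variable {V V₁ V₂ : ℝ → ℝ} {k h R r W : ℝ}

theorem radialVelocitySq_le_of_le (hV : V₁ r ≤ V₂ r) :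
    radialVelocitySq V₂ k h r ≤ radialVelocitySq V₁ k h r := by
  unfold radialVelocitySq
  gcongr

theorem radialVelocitySq_turningPoint (hR : R ≠ 0) (hVR : 0 < V R) (hk : 0 ≤ 1 - k ^ 2 * V R) :
    radialVelocitySq V k (R * √((1 - k ^ 2 * V R) / V R)) R = 0 := by
  unfold radialVelocitySq
  rw [mul_pow, sq_sqrt (by positivity)]
  field_simp
  ring

theorem radialVelocitySq_const_of_turningPoint (hR : R ≠ 0)
    (hturn : radialVelocitySq (Function.const ℝ W) k h R = 0) (r : ℝ) :
    radialVelocitySq (Function.const ℝ W) k h r = W * (h / R) ^ 2 * (1 - (R / r) ^ 2) := by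
  have hcancel : (h / R) ^ 2 * (R / r) ^ 2 = h ^ 2 / r ^ 2 := by
    rw [← mul_pow, div_mul_div_cancel₀ hR, div_pow]
  simp only [radialVelocitySq, Function.const_apply] at hturn ⊢
  linear_combination hturn + W * hcancel

theorem one_sub_div_sq_pos (hR : 0 < R) (hr : R < r) : 0 < 1 - (R / r) ^ 2 := by
  have hr0 : 0 < r := hR.trans hr
  exact sub_pos.2 (pow_lt_one₀ (by positivity) ((div_lt_one hr0).2 hr) two_ne_zero)

theorem radialVelocitySq_const_pos (hW : 0 < W) (hR : 0 < R) (hh : h ≠ 0)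
    (hturn : radialVelocitySq (Function.const ℝ W) k h R = 0) (hr : R < r) :
    0 < radialVelocitySq (Function.const ℝ W) k h r := by
  have hu := one_sub_div_sq_pos hR hr
  rw [radialVelocitySq_const_of_turningPoint hR.ne' hturn]
  positivity

end RadialVelocity

section StraightLine

variable {R r : ℝ}

theorem hasDerivAt_arccos_div (hR : 0 < R) (hr : R < r) :
    HasDerivAt (fun r => arccos (R / r)) (R / (r ^ 2 * √(1 - (R / r) ^ 2))) r := by
  have hr0 : 0 < r := hR.trans hr
  have hlt : R / r < 1 := (div_lt_one hr0).2 hr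
  have hgt : -1 < R / r := neg_one_lt_zero.trans (div_pos hR hr0)
  have hdiv : HasDerivAt (fun r => R / r) (-R / r ^ 2) r := by
    simpa using (hasDerivAt_const r R).fun_div (hasDerivAt_id r) hr0.ne'
  refine ((hasDerivAt_arccos hgt.ne' hlt.ne).comp r hdiv).congr_deriv ?_
  ring

theorem lintegral_Ioi_deriv_arccos_div (hR : 0 < R) :
    ∫⁻ r in Ioi R, ENNReal.ofReal (R / (r ^ 2 * √(1 - (R / r) ^ 2))) = ENNReal.ofReal (π / 2) := by
  have hcont : ContinuousWithinAt (fun r => arccos (R / r)) (Ici R) R :=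
    (continuous_arccos.continuousAt.comp
      (continuousAt_const.div continuousAt_id hR.ne')).continuousWithinAt
  have hderiv := fun r (hr : r ∈ Ioi R) => hasDerivAt_arccos_div hR hr
  have hnonneg : ∀ r ∈ Ioi R, 0 ≤ R / (r ^ 2 * √(1 - (R / r) ^ 2)) :=
    fun r _ => by positivity
  have hlim : Tendsto (fun r => arccos (R / r)) atTop (𝓝 (π / 2)) := by
    simpa [Function.comp_def] using
      (continuous_arccos.tendsto 0).comp (tendsto_id.const_div_atTop R)
  rw [← ofReal_integral_eq_lintegral_ofReal
      (integrableOn_Ioi_deriv_of_nonneg hcont hderiv hnonneg hlim)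
      (ae_restrict_of_forall_mem measurableSet_Ioi hnonneg),
    integral_Ioi_of_hasDerivAt_of_nonneg hcont hderiv hnonneg hlim,
    div_self hR.ne', arccos_one, sub_zero]

end StraightLine

section AngularChange

variable {V₁ V₂ : ℝ → ℝ} {k h R W : ℝ}

theorem angularChange_mono (hR : 0 ≤ R) (hV : ∀ r > R, V₁ r ≤ V₂ r)
    (hpos : ∀ r > R, 0 < radialVelocitySq V₂ k h r) :
    angularChange V₁ k h R ≤ angularChange V₂ k h R := by
  unfold angularChange
  gcongr ENNReal.ofReal (2 * h) * ?_
  refine setLIntegral_mono' measurableSet_Ioi fun r hr => ENNReal.ofReal_le_ofReal ?_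
  have hr0 : 0 < r := hR.trans_lt hr
  have hvel : 0 < √(radialVelocitySq V₂ k h r) := sqrt_pos.2 (hpos r hr)
  gcongr
  exact radialVelocitySq_le_of_le (hV r hr)

theorem angularChange_const (hW : 0 < W) (hR : 0 < R) (hh : 0 < h)
    (hturn : radialVelocitySq (Function.const ℝ W) k h R = 0) :
    angularChange (Function.const ℝ W) k h R = ENNReal.ofReal (π / √W) := by
  have hline : ∀ r ∈ Ioi R,
      2 * h * (1 / (r ^ 2 * √(radialVelocitySq (Function.const ℝ W) k h r))) =
        2 / √W * (R / (r ^ 2 * √(1 - (R / r) ^ 2))) := by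
    intro r hr
    have hr0 : 0 < r := hR.trans hr
    rw [radialVelocitySq_const_of_turningPoint hR.ne' hturn, sqrt_mul (by positivity),
      sqrt_mul hW.le, sqrt_sq (by positivity)]
    field_simp
  calc angularChange (Function.const ℝ W) k h R
      = ∫⁻ r in Ioi R, ENNReal.ofReal (2 / √W) *
          ENNReal.ofReal (R / (r ^ 2 * √(1 - (R / r) ^ 2))) := by
        rw [angularChange, ← lintegral_const_mul' _ _ ENNReal.ofReal_ne_top]
        refine setLIntegral_congr_fun measurableSet_Ioi fun r hr => ?_
        simp only [← ENNReal.ofReal_mul (show 0 ≤ 2 * h by positivity), hline r hr,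
          ENNReal.ofReal_mul (show 0 ≤ 2 / √W by positivity)]
    _ = ENNReal.ofReal (2 / √W) * ENNReal.ofReal (π / 2) := by
        rw [lintegral_const_mul' _ _ ENNReal.ofReal_ne_top, lintegral_Ioi_deriv_arccos_div hR]
    _ = ENNReal.ofReal (π / √W) := by
        rw [← ENNReal.ofReal_mul (by positivity)]
        congr 1
        ring

end AngularChange

theorem negative_mass_schwarzschild_angular_change_lt_pi_general
    {V : ℝ → ℝ} {k R h : ℝ} (hR : 0 < R) (hVR : 1 < V R) (hV : ∀ r > R, V r ≤ V R)
    (hkR : 0 < 1 - k ^ 2 * V R) (hh : h = R * √((1 - k ^ 2 * V R) / V R)) :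
    0 < h ∧
    (∀ r > R, 0 < radialVelocitySq V k h r) ∧
    angularChange V k h R ≤ ENNReal.ofReal (π / √(V R)) ∧
    π / √(V R) < π := by
  have hVR0 : 0 < V R := one_pos.trans hVR
  have hh0 : 0 < h := hh ▸ by positivity
  have hturn : radialVelocitySq (Function.const ℝ (V R)) k h R = 0 :=
    hh ▸ radialVelocitySq_turningPoint (V := V) hR.ne' hVR0 hkR.le
  have hpos : ∀ r > R, 0 < radialVelocitySq (Function.const ℝ (V R)) k h r :=
    fun r hr => radialVelocitySq_const_pos hVR0 hR hh0.ne' hturn hr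
  refine ⟨hh0, fun r hr => (hpos r hr).trans_le (radialVelocitySq_le_of_le (hV r hr)), ?_, ?_⟩
  · exact (angularChange_mono hR.le hV hpos).trans_eq (angularChange_const hVR0 hR hh0 hturn)
  · exact div_lt_self pi_pos (lt_sqrt_of_sq_lt (by simpa using hVR))

/-- Inequality (33): along an equatorial causal geodesic in negative-mass
Schwarzschild in `d+1` dimensions (`n = d - 2 ≥ 2`, `V(r) = 1 + r_sⁿ/rⁿ`) with
turning point `r = R`, constant `k ≥ 0` with `1 - k²V(R) > 0` and angular momentum
`h = R√((1 - k²V(R))/V(R)) > 0`, the radicand `1 - V(r)(k² + h²/r²)` is positive for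
`r > R`, and the total angular change satisfies
`2h ∫_R^∞ dr/(r² √(1 - V(r)(k² + h²/r²))) ≤ π/√(V(R)) < π`. -/
theorem negative_mass_schwarzschild_angular_change_lt_pi
    (n : ℕ) (hn : 2 ≤ n) (r_s k R h : ℝ) (hrs : 0 < r_s) (hk : 0 ≤ k) (hR : 0 < R)
    (hkR : 0 < 1 - k ^ 2 * (1 + r_s ^ n / R ^ n))
    (hh : h = R * Real.sqrt ((1 - k ^ 2 * (1 + r_s ^ n / R ^ n)) / (1 + r_s ^ n / R ^ n))) :
    0 < h ∧
    (∀ r > R, 0 < 1 - (1 + r_s ^ n / r ^ n) * (k ^ 2 + h ^ 2 / r ^ 2)) ∧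
    ENNReal.ofReal (2 * h) *
        ∫⁻ r in Set.Ioi R,
          ENNReal.ofReal
            (1 / (r ^ 2 * Real.sqrt (1 - (1 + r_s ^ n / r ^ n) * (k ^ 2 + h ^ 2 / r ^ 2)))) ≤
      ENNReal.ofReal (π / Real.sqrt (1 + r_s ^ n / R ^ n)) ∧
    π / Real.sqrt (1 + r_s ^ n / R ^ n) < π :=
  negative_mass_schwarzschild_angular_change_lt_pi_general (V := fun r => 1 + r_s ^ n / r ^ n)
    hR (lt_add_of_pos_right 1 (by positivity)) (fun r hr => by gcongr) hkR hh
end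

section
/- Let m > 0, a ∈ ℝ, R > 2m, and set α² = 1 + (a²/R²)(1 + 2m/R), Σ(r,θ) = r² + a² cos²θ, Δ(r) = r² − 2mr + a², Λ²(r,θ) = r² + a² + 2m a² r sin²θ / Σ(r,θ). Then for all r ≥ R and all θ ∈ ℝ: (i) 1 − 2mr/Σ(r,θ) ≥ 1 − 2m/r; (ii) Σ(r,θ)/Δ(r) ≤ α²/(1 − 2m/r); (iii) Σ(r,θ) ≤ α² r²; (iv) Λ²(r,θ) ≤ α² r². -/
open Real

/-! `α²` decreases with the radius, so it is enough to treat `R = r`. There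
`α² r² = r² + a² + 2ma²/r`, which is what `Λ²` becomes when `sin²θ / Σ` is replaced by its upper
bound `1 / r²`. Since `Σ ≤ r² + a² ≤ Λ²`, the bound on `Σ` follows from the one on `Λ²`, and the
bound on `Σ / Δ` then only needs `Δ ≥ (1 - 2m/r) r²`. -/

noncomputable section

namespace Kerr

/-- The Boyer–Lindquist coefficient `Σ`; `-Σ` multiplies `dθ²` in the Kerr line element. -/
def sigma (a r θ : ℝ) : ℝ := r ^ 2 + a ^ 2 * cos θ ^ 2

/-- The Boyer–Lindquist coefficient `Δ`; `-Σ / Δ` multiplies `dr²` in the Kerr line element. -/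
def delta (m a r : ℝ) : ℝ := r ^ 2 - 2 * m * r + a ^ 2

/-- The Boyer–Lindquist coefficient `Λ²`; `-Λ² sin²θ` multiplies `dφ²` in the Kerr line element.
The square is defined directly, since `Λ` itself never occurs. -/
def lambdaSq (m a r θ : ℝ) : ℝ := r ^ 2 + a ^ 2 + 2 * m * a ^ 2 * r * sin θ ^ 2 / sigma a r θ

/-- The squared dilation constant `α²` of the quasi-Schwarzschild line element that bounds the Kerr
line element outside the radius `R`, as a function of `R`. -/
def dilationSq (m a R : ℝ) : ℝ := 1 + a ^ 2 / R ^ 2 * (1 + 2 * m / R)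

variable {m a r θ : ℝ}

theorem sq_le_sigma : r ^ 2 ≤ sigma a r θ :=
  le_add_of_nonneg_right (by positivity)

theorem sigma_nonneg : 0 ≤ sigma a r θ :=
  (sq_nonneg r).trans sq_le_sigma

theorem sigma_le_sq_add_sq : sigma a r θ ≤ r ^ 2 + a ^ 2 :=
  add_le_add_right (mul_le_of_le_one_right (sq_nonneg a) (cos_sq_le_one θ)) _

theorem sigma_le_lambdaSq (hm : 0 ≤ m) (hr : 0 ≤ r) : sigma a r θ ≤ lambdaSq m a r θ := by
  have hσ : 0 ≤ sigma a r θ := sigma_nonneg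
  exact sigma_le_sq_add_sq.trans (le_add_of_nonneg_right (by positivity))

theorem antitoneOn_dilationSq (hm : 0 ≤ m) : AntitoneOn (dilationSq m a) (Set.Ioi 0) := by
  intro R (hR : 0 < R) r (hr : 0 < r) hRr
  unfold dilationSq
  gcongr

theorem dilationSq_mul_sq (hr : r ≠ 0) :
    dilationSq m a r * r ^ 2 = r ^ 2 + a ^ 2 + 2 * m * a ^ 2 / r := by
  unfold dilationSq
  field_simp
  ring

theorem lambdaSq_le_dilationSq_mul_sq (hm : 0 ≤ m) (hr : 0 < r) :
    lambdaSq m a r θ ≤ dilationSq m a r * r ^ 2 :=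
  calc lambdaSq m a r θ
      ≤ r ^ 2 + a ^ 2 + 2 * m * a ^ 2 * r * 1 / r ^ 2 := by
        unfold lambdaSq
        gcongr
        exacts [sin_sq_le_one θ, sq_le_sigma]
    _ = r ^ 2 + a ^ 2 + 2 * m * a ^ 2 / r := by field_simp
    _ = dilationSq m a r * r ^ 2 := (dilationSq_mul_sq hr.ne').symm

theorem sigma_le_dilationSq_mul_sq (hm : 0 ≤ m) (hr : 0 < r) :
    sigma a r θ ≤ dilationSq m a r * r ^ 2 :=
  (sigma_le_lambdaSq hm hr.le).trans (lambdaSq_le_dilationSq_mul_sq hm hr)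

theorem two_mul_mul_div_sigma_le_two_mul_div (hm : 0 ≤ m) (hr : 0 < r) :
    2 * m * r / sigma a r θ ≤ 2 * m / r :=
  calc 2 * m * r / sigma a r θ
      ≤ 2 * m * r / r ^ 2 := by gcongr; exact sq_le_sigma
    _ = 2 * m / r := by field_simp

theorem one_sub_two_mul_div_mul_sq_le_delta (hr : r ≠ 0) :
    (1 - 2 * m / r) * r ^ 2 ≤ delta m a r :=
  calc (1 - 2 * m / r) * r ^ 2
      = r ^ 2 - 2 * m * r := by field_simp
    _ ≤ delta m a r := le_add_of_nonneg_right (sq_nonneg a)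

theorem sigma_div_delta_le_dilationSq_div (hm : 0 ≤ m) (hmr : 2 * m < r) :
    sigma a r θ / delta m a r ≤ dilationSq m a r / (1 - 2 * m / r) := by
  have hr : 0 < r := by linarith
  have hlapse : 0 < 1 - 2 * m / r := sub_pos.2 ((div_lt_one hr).2 hmr)
  have hσ : sigma a r θ ≤ dilationSq m a r * r ^ 2 := sigma_le_dilationSq_mul_sq hm hr
  calc sigma a r θ / delta m a r
      ≤ dilationSq m a r * r ^ 2 / ((1 - 2 * m / r) * r ^ 2) :=
        div_le_div₀ (sigma_nonneg.trans hσ) hσ (by positivity)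
          (one_sub_two_mul_div_mul_sq_le_delta hr.ne')
    _ = dilationSq m a r / (1 - 2 * m / r) := mul_div_mul_right _ _ (by positivity)

end Kerr

end

/-- Component bounds for the Boyer–Lindquist coefficients of the Kerr metric with
mass `m > 0` and rotation parameter `a`, for `r ≥ R > 2m`, with dilation constant
`α² = 1 + (a²/R²)(1 + 2m/R)`:
(i) `1 - 2mr/Σ ≥ 1 - 2m/r`; (ii) `Σ/Δ ≤ α²/(1 - 2m/r)`; (iii) `Σ ≤ α²r²`;
(iv) `Λ² ≤ α²r²`, where `Σ = r² + a²cos²θ`, `Δ = r² - 2mr + a²`,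
`Λ² = r² + a² + 2ma²r sin²θ/Σ`. -/
theorem kerr_coefficient_bounds (m a R α2 : ℝ) (hm : 0 < m) (hR : 2 * m < R)
    (hα2 : α2 = 1 + a ^ 2 / R ^ 2 * (1 + 2 * m / R)) :
    ∀ r ≥ R, ∀ θ : ℝ,
      (1 - 2 * m / r ≤ 1 - 2 * m * r / (r ^ 2 + a ^ 2 * cos θ ^ 2)) ∧
      ((r ^ 2 + a ^ 2 * cos θ ^ 2) / (r ^ 2 - 2 * m * r + a ^ 2)
        ≤ α2 / (1 - 2 * m / r)) ∧
      (r ^ 2 + a ^ 2 * cos θ ^ 2 ≤ α2 * r ^ 2) ∧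
      (r ^ 2 + a ^ 2 + 2 * m * a ^ 2 * r * sin θ ^ 2 / (r ^ 2 + a ^ 2 * cos θ ^ 2)
        ≤ α2 * r ^ 2) := by
  intro r hRr θ
  have hR₀ : 0 < R := by linarith
  have hr : 0 < r := hR₀.trans_le hRr
  have hmr : 2 * m < r := hR.trans_le hRr
  have hlapse : 0 ≤ 1 - 2 * m / r := sub_nonneg.2 ((div_le_one hr).2 hmr.le)
  have hα : Kerr.dilationSq m a r ≤ α2 := hα2 ▸ Kerr.antitoneOn_dilationSq hm.le hR₀ hr hRr
  have hαr : Kerr.dilationSq m a r * r ^ 2 ≤ α2 * r ^ 2 := by gcongr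
  exact ⟨sub_le_sub_left (Kerr.two_mul_mul_div_sigma_le_two_mul_div hm.le hr) 1,
    (Kerr.sigma_div_delta_le_dilationSq_div hm.le hmr).trans (div_le_div_of_nonneg_right hα hlapse),
    (Kerr.sigma_le_dilationSq_mul_sq hm.le hr).trans hαr,
    (Kerr.lambdaSq_le_dilationSq_mul_sq hm.le hr).trans hαr⟩
end
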